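/- Let ξ ∈ ℝ, μₙ ∈ ℝ and κₙ, αₙ, βₙ > 0. Then ∫ log N(ξ | μ, λ^{−1}) dNG(μₙ, κₙ, αₙ, βₙ)(μ, λ) = log N(ξ | μₙ, βₙ/αₙ) − (1/2)(1/κₙ + log αₙ − ψ(αₙ)), where ψ is the digamma function. -/

import Mathlib

open MeasureTheory ProbabilityTheory Real
open scoped ENNReal NNReal

/-- The digamma function: derivative of `log ∘ Γ`. -/
noncomputable def digamma (x : ℝ) : ℝ := deriv (fun y => Real.log (Real.Gamma y)) x

/-- Joint density of the normal-gamma distribution `NG(m, κ, α, β)` at `p = (μ, λ)`: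
`N(μ | m, (κλ)⁻¹) · Gamma(λ | α, β)`. -/
noncomputable def normalGammaPDFReal (m κ α β : ℝ) (p : ℝ × ℝ) : ℝ :=
  gaussianPDFReal m (Real.toNNReal (κ * p.2)⁻¹) p.1 * gammaPDFReal α β p.2

/-- The normal-gamma distribution `NG(m, κ, α, β)` as a measure on `ℝ × ℝ`
(supported on `ℝ × (0, ∞)`). -/
noncomputable def normalGamma (m κ α β : ℝ) : Measure (ℝ × ℝ) :=
  MeasureTheory.volume.withDensity (fun p => ENNReal.ofReal (normalGammaPDFReal m κ α β p))

/-! Conditionally on `λ`, the log-density `log N(ξ | μ, λ⁻¹) = (log λ - log (2π) - λ (ξ - μ)²) / 2`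
is quadratic in the Gaussian variable `μ`, and `E[λ (ξ - μ)² | λ] = κ⁻¹ + (ξ - m)² λ`. So only
`E[λ]` and `E[log λ]` under `Gamma(α, β)` are needed. Both come from the moment formula
`E[λ ^ s] = Γ(α + s) / (Γ(α) β ^ s)`: the first is `s = 1`, and since `E[λ ^ s]` is the moment
generating function of `log λ`, the second is the derivative at `s = 0` of
`log Γ(α + s) - log Γ(α) - s log β`. -/

section Variance

lemma integral_const_sub_sq {Ω : Type*} [MeasurableSpace Ω] {P : Measure Ω} [IsProbabilityMeasure P]
    {X : Ω → ℝ} (hX : MemLp X 2 P) (c : ℝ) :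
    ∫ ω, (c - X ω) ^ 2 ∂P = Var[X; P] + (c - P[X]) ^ 2 := by
  have hvar : Var[fun ω ↦ c - X ω; P]
      = ∫ ω, (c - X ω) ^ 2 ∂P - (∫ ω, (c - X ω) ∂P) ^ 2 :=
    variance_eq_sub ((memLp_const c).sub hX)
  rw [variance_const_sub hX.aestronglyMeasurable,
    integral_sub (integrable_const c) (hX.integrable one_le_two), integral_const, probReal_univ,
    one_smul] at hvar
  exact eq_add_of_sub_eq hvar.symm

lemma integrable_const_sub_sq_gaussianReal (c m : ℝ) (v : ℝ≥0) :
    Integrable (fun x ↦ (c - x) ^ 2) (gaussianReal m v) :=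
  ((memLp_const c).sub (memLp_id_gaussianReal 2)).integrable_sq

lemma integral_const_sub_sq_gaussianReal (c m : ℝ) (v : ℝ≥0) :
    ∫ x, (c - x) ^ 2 ∂gaussianReal m v = v + (c - m) ^ 2 := by
  simpa using integral_const_sub_sq (memLp_id_gaussianReal (μ := m) (v := v) 2) c

end Variance

section Gamma

variable {a r s : ℝ}

instance instSFiniteGammaMeasure (a r : ℝ) : SFinite (gammaMeasure a r) := by
  unfold gammaMeasure; infer_instance

lemma measurable_gammaPDF (a r : ℝ) : Measurable (gammaPDF a r) :=
  (measurable_gammaPDFReal a r).ennreal_ofReal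

lemma ae_pos_gammaMeasure (a r : ℝ) : ∀ᵐ x ∂gammaMeasure a r, 0 < x := by
  rw [gammaMeasure, ae_withDensity_iff (measurable_gammaPDF a r)]
  filter_upwards [Measure.ae_ne volume (0 : ℝ)] with x hx hpdf
  exact lt_of_le_of_ne (not_lt.mp fun hneg ↦ hpdf (gammaPDF_of_neg hneg)) hx.symm

lemma gammaPDFReal_mul_rpow (ha : 0 < a) (hr : 0 < r) (has : 0 < a + s) {x : ℝ} (hx : 0 < x) :
    gammaPDFReal a r x * x ^ s = Gamma (a + s) / (Gamma a * r ^ s) * gammaPDFReal (a + s) r x := by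
  have hΓ := (Gamma_pos_of_pos has).ne'
  simp only [gammaPDFReal, if_pos hx.le]
  rw [show a + s - 1 = a - 1 + s by ring, rpow_add hx, rpow_add hr]
  field_simp

lemma lintegral_rpow_gammaMeasure (ha : 0 < a) (hr : 0 < r) (has : 0 < a + s) :
    ∫⁻ x, ENNReal.ofReal (x ^ s) ∂gammaMeasure a r
      = ENNReal.ofReal (Gamma (a + s) / (Gamma a * r ^ s)) := by
  have hconst : 0 ≤ Gamma (a + s) / (Gamma a * r ^ s) := by
    have := Gamma_pos_of_pos has
    positivity
  calc ∫⁻ x, ENNReal.ofReal (x ^ s) ∂gammaMeasure a r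
      = ∫⁻ x, gammaPDF a r x * ENNReal.ofReal (x ^ s) :=
        lintegral_withDensity_eq_lintegral_mul _ (measurable_gammaPDF a r) (by fun_prop)
    _ = ∫⁻ x, ENNReal.ofReal (Gamma (a + s) / (Gamma a * r ^ s)) * gammaPDF (a + s) r x := by
        refine lintegral_congr_ae ?_
        filter_upwards [Measure.ae_ne volume (0 : ℝ)] with x hx
        rcases hx.lt_or_gt with hneg | hpos
        · simp [gammaPDF_of_neg hneg]
        · rw [gammaPDF, gammaPDF, ← ENNReal.ofReal_mul (gammaPDFReal_nonneg ha hr x),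
            ← ENNReal.ofReal_mul hconst, gammaPDFReal_mul_rpow ha hr has hpos]
    _ = ENNReal.ofReal (Gamma (a + s) / (Gamma a * r ^ s)) := by
        rw [lintegral_const_mul _ (measurable_gammaPDF _ _),
          lintegral_gammaPDF_eq_one has hr, mul_one]

lemma ae_rpow_nonneg_gammaMeasure (a r s : ℝ) : 0 ≤ᵐ[gammaMeasure a r] fun x ↦ x ^ s := by
  filter_upwards [ae_pos_gammaMeasure a r] with x hx using rpow_nonneg hx.le s

lemma integrable_rpow_gammaMeasure (ha : 0 < a) (hr : 0 < r) (has : 0 < a + s) :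
    Integrable (fun x ↦ x ^ s) (gammaMeasure a r) := by
  rw [← lintegral_ofReal_ne_top_iff_integrable (by fun_prop) (ae_rpow_nonneg_gammaMeasure a r s),
    lintegral_rpow_gammaMeasure ha hr has]
  exact ENNReal.ofReal_ne_top

lemma integral_rpow_gammaMeasure (ha : 0 < a) (hr : 0 < r) (has : 0 < a + s) :
    ∫ x, x ^ s ∂gammaMeasure a r = Gamma (a + s) / (Gamma a * r ^ s) := by
  have := Gamma_pos_of_pos has
  rw [integral_eq_lintegral_of_nonneg_ae (ae_rpow_nonneg_gammaMeasure a r s) (by fun_prop),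
    lintegral_rpow_gammaMeasure ha hr has, ENNReal.toReal_ofReal (by positivity)]

lemma integrable_id_gammaMeasure (ha : 0 < a) (hr : 0 < r) :
    Integrable (fun x ↦ x) (gammaMeasure a r) := by
  simpa using integrable_rpow_gammaMeasure (s := 1) ha hr (by positivity)

lemma integral_id_gammaMeasure (ha : 0 < a) (hr : 0 < r) : ∫ x, x ∂gammaMeasure a r = a / r := by
  have hmoment := integral_rpow_gammaMeasure (s := 1) ha hr (by positivity)
  simp only [rpow_one, Gamma_add_one ha.ne'] at hmoment
  rw [hmoment, mul_comm a, mul_div_mul_left _ _ (Gamma_pos_of_pos ha).ne']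

lemma ae_exp_mul_log_eq_rpow_gammaMeasure (a r s : ℝ) :
    (fun x ↦ rexp (s * Real.log x)) =ᵐ[gammaMeasure a r] fun x ↦ x ^ s := by
  filter_upwards [ae_pos_gammaMeasure a r] with x hx
  rw [rpow_def_of_pos hx, mul_comm]

lemma zero_mem_interior_integrableExpSet_log_gammaMeasure (ha : 0 < a) (hr : 0 < r) :
    0 ∈ interior (integrableExpSet Real.log (gammaMeasure a r)) := by
  refine interior_mono (fun s (hs : -a < s) ↦ ?_) (isOpen_Ioi.interior_eq.ge (neg_lt_zero.mpr ha))
  exact (integrable_rpow_gammaMeasure ha hr (neg_lt_iff_pos_add'.mp hs)).congr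
    (ae_exp_mul_log_eq_rpow_gammaMeasure a r s).symm

lemma cgf_log_gammaMeasure (ha : 0 < a) (hr : 0 < r) (has : 0 < a + s) :
    cgf Real.log (gammaMeasure a r) s
      = Real.log (Gamma (a + s)) - (Real.log (Gamma a) + s * Real.log r) := by
  have hΓa := Gamma_pos_of_pos ha
  have hrs := rpow_pos_of_pos hr s
  rw [cgf, mgf, integral_congr_ae (ae_exp_mul_log_eq_rpow_gammaMeasure a r s),
    integral_rpow_gammaMeasure ha hr has, Real.log_div (Gamma_pos_of_pos has).ne' (by positivity),
    Real.log_mul hΓa.ne' hrs.ne', Real.log_rpow hr]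

lemma hasDerivAt_log_Gamma (ha : 0 < a) :
    HasDerivAt (fun y ↦ Real.log (Gamma y)) (digamma a) a := by
  have hΓ : DifferentiableAt ℝ Gamma a :=
    differentiableAt_Gamma fun n ↦ ((neg_nonpos.mpr n.cast_nonneg).trans_lt ha).ne'
  exact (hΓ.log (Gamma_pos_of_pos ha).ne').hasDerivAt

lemma integrable_log_gammaMeasure (ha : 0 < a) (hr : 0 < r) :
    Integrable Real.log (gammaMeasure a r) :=
  integrable_of_mem_interior_integrableExpSet
    (zero_mem_interior_integrableExpSet_log_gammaMeasure ha hr)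

lemma integral_log_gammaMeasure (ha : 0 < a) (hr : 0 < r) :
    ∫ x, Real.log x ∂gammaMeasure a r = digamma a - Real.log r := by
  have := isProbabilityMeasure_gammaMeasure ha hr
  have hcgf : cgf Real.log (gammaMeasure a r)
      =ᶠ[nhds 0] fun s ↦ Real.log (Gamma (a + s)) - (Real.log (Gamma a) + s * Real.log r) := by
    filter_upwards [lt_mem_nhds (neg_lt_zero.mpr ha)] with s hs
    exact cgf_log_gammaMeasure ha hr (neg_lt_iff_pos_add'.mp hs)
  have hderiv : HasDerivAt
      (fun s ↦ Real.log (Gamma (a + s)) - (Real.log (Gamma a) + s * Real.log r))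
      (digamma a - Real.log r) 0 := by
    have hΓ : HasDerivAt (fun s ↦ Real.log (Gamma (a + s))) (digamma a) 0 :=
      HasDerivAt.comp_const_add a 0 (by simpa using hasDerivAt_log_Gamma ha)
    exact hΓ.sub ((hasDerivAt_mul_const _).const_add _)
  calc ∫ x, Real.log x ∂gammaMeasure a r
      = deriv (cgf Real.log (gammaMeasure a r)) 0 := by
        simp [deriv_cgf_zero (zero_mem_interior_integrableExpSet_log_gammaMeasure ha hr)]
    _ = digamma a - Real.log r := (hderiv.congr_of_eventuallyEq hcgf).deriv

end Gamma

section NormalGamma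

variable {m κ α β l : ℝ}

/-- The conditional law `N(m, (κλ)⁻¹)` of `μ` given `λ` under `NG(m, κ, α, β)`, as a Markov kernel
on all of `ℝ`. When `κλ ≤ 0` the variance is truncated to `0` and the kernel is the Dirac mass at
`m`, so that no restriction to `λ > 0` is needed. -/
noncomputable def normalGammaCondKernel (m κ : ℝ) : Kernel ℝ ℝ where
  toFun l := gaussianReal m (Real.toNNReal (κ * l)⁻¹)
  measurable' := measurable_gaussianReal.comp (f := fun l ↦ (m, Real.toNNReal (κ * l)⁻¹))
    (by fun_prop)

lemma normalGammaCondKernel_apply (m κ l : ℝ) :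
    normalGammaCondKernel m κ l = gaussianReal m (Real.toNNReal (κ * l)⁻¹) := rfl

instance instIsMarkovKernelNormalGammaCondKernel (m κ : ℝ) :
    IsMarkovKernel (normalGammaCondKernel m κ) :=
  ⟨fun l ↦ instIsProbabilityMeasureGaussianReal m (Real.toNNReal (κ * l)⁻¹)⟩

lemma measurable_normalGammaPDFReal (m κ α β : ℝ) : Measurable (normalGammaPDFReal m κ α β) := by
  unfold normalGammaPDFReal
  fun_prop

lemma lintegral_normalGammaPDFReal_mul_left (hκ : 0 < κ) (hl : l ≠ 0) {f : ℝ → ℝ≥0∞}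
    (hf : Measurable f) :
    ∫⁻ x, ENNReal.ofReal (normalGammaPDFReal m κ α β (x, l)) * f x
      = gammaPDF α β l * ∫⁻ x, f x ∂normalGammaCondKernel m κ l := by
  rcases hl.lt_or_gt with hneg | hpos
  · simp [normalGammaPDFReal, gammaPDF_of_neg hneg, gammaPDFReal, not_le.mpr hneg]
  · have hv : Real.toNNReal (κ * l)⁻¹ ≠ 0 := (Real.toNNReal_pos.mpr (by positivity)).ne'
    rw [normalGammaCondKernel_apply, gaussianReal_of_var_ne_zero m hv,
      lintegral_withDensity_eq_lintegral_mul _ (measurable_gaussianPDF m _) hf,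
      ← lintegral_const_mul _ ((measurable_gaussianPDF m _).mul hf)]
    refine lintegral_congr fun x ↦ ?_
    rw [normalGammaPDFReal, ENNReal.ofReal_mul (gaussianPDFReal_nonneg _ _ _), Pi.mul_apply,
      gaussianPDF, gammaPDF]
    ring

lemma lintegral_normalGamma (hκ : 0 < κ) {f : ℝ × ℝ → ℝ≥0∞} (hf : Measurable f) :
    ∫⁻ p, f p ∂normalGamma m κ α β
      = ∫⁻ l, ∫⁻ x, f (x, l) ∂normalGammaCondKernel m κ l ∂gammaMeasure α β := by
  have hpdf := (measurable_normalGammaPDFReal m κ α β).ennreal_ofReal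
  have hinner : Measurable fun l ↦ ∫⁻ x, f (x, l) ∂normalGammaCondKernel m κ l :=
    (hf.comp measurable_swap).lintegral_kernel_prod_right'
  rw [normalGamma, lintegral_withDensity_eq_lintegral_mul _ hpdf hf, Measure.volume_eq_prod,
    lintegral_prod_symm _ (hpdf.mul hf).aemeasurable, gammaMeasure,
    lintegral_withDensity_eq_lintegral_mul _ (measurable_gammaPDF α β) hinner]
  refine lintegral_congr_ae ?_
  filter_upwards [Measure.ae_ne volume (0 : ℝ)] with l hl
  exact lintegral_normalGammaPDFReal_mul_left hκ hl (hf.comp measurable_prodMk_right)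

lemma measurePreserving_swap_normalGamma (m α β : ℝ) (hκ : 0 < κ) :
    MeasurePreserving Prod.swap (normalGamma m κ α β)
      (gammaMeasure α β ⊗ₘ normalGammaCondKernel m κ) := by
  refine ⟨measurable_swap, Measure.ext_of_lintegral _ fun f hf ↦ ?_⟩
  rw [lintegral_map hf measurable_swap, Measure.lintegral_compProd hf]
  exact lintegral_normalGamma hκ (hf.comp measurable_swap)

lemma measurePreserving_snd_normalGamma (m α β : ℝ) (hκ : 0 < κ) :
    MeasurePreserving Prod.snd (normalGamma m κ α β) (gammaMeasure α β) :=
  MeasurePreserving.comp (g := Prod.fst) ⟨measurable_fst, Measure.fst_compProd _ _⟩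
    (measurePreserving_swap_normalGamma m α β hκ)

lemma ae_snd_pos_normalGamma (m α β : ℝ) (hκ : 0 < κ) : ∀ᵐ p ∂normalGamma m κ α β, 0 < p.2 :=
  (measurePreserving_snd_normalGamma m α β hκ).quasiMeasurePreserving.ae (ae_pos_gammaMeasure α β)

lemma isProbabilityMeasure_normalGamma (m : ℝ) (hκ : 0 < κ) (hα : 0 < α) (hβ : 0 < β) :
    IsProbabilityMeasure (normalGamma m κ α β) := by
  have := isProbabilityMeasure_gammaMeasure hα hβ
  exact (measurePreserving_snd_normalGamma m α β hκ).hasLaw.isProbabilityMeasure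

lemma integrable_log_snd_normalGamma (m : ℝ) (hκ : 0 < κ) (hα : 0 < α) (hβ : 0 < β) :
    Integrable (fun p ↦ Real.log p.2) (normalGamma m κ α β) :=
  (measurePreserving_snd_normalGamma m α β hκ).integrable_comp_of_integrable
    (g := Real.log) (integrable_log_gammaMeasure hα hβ)

lemma integral_log_snd_normalGamma (m : ℝ) (hκ : 0 < κ) (hα : 0 < α) (hβ : 0 < β) :
    ∫ p, Real.log p.2 ∂normalGamma m κ α β = digamma α - Real.log β := by
  rw [← integral_log_gammaMeasure hα hβ]
  exact (measurePreserving_snd_normalGamma m α β hκ).hasLaw.integral_comp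
    measurable_log.aestronglyMeasurable

lemma integral_mul_const_sub_sq_normalGammaCondKernel (c m : ℝ) (hκ : 0 < κ) (hl : 0 < l) :
    ∫ x, l * (c - x) ^ 2 ∂normalGammaCondKernel m κ l = κ⁻¹ + (c - m) ^ 2 * l := by
  rw [integral_const_mul, normalGammaCondKernel_apply, integral_const_sub_sq_gaussianReal,
    Real.coe_toNNReal _ (by positivity)]
  field_simp

lemma integrable_mul_const_sub_sq_compProd (c m : ℝ) (hκ : 0 < κ) (hα : 0 < α) (hβ : 0 < β) :
    Integrable (fun p ↦ p.1 * (c - p.2) ^ 2) (gammaMeasure α β ⊗ₘ normalGammaCondKernel m κ) := by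
  have := isProbabilityMeasure_gammaMeasure hα hβ
  rw [Measure.integrable_compProd_iff (by fun_prop)]
  refine ⟨ae_of_all _ fun l ↦ (integrable_const_sub_sq_gaussianReal c m _).const_mul l, ?_⟩
  have hbound : Integrable (fun l ↦ κ⁻¹ + (c - m) ^ 2 * l) (gammaMeasure α β) :=
    (integrable_const _).add ((integrable_id_gammaMeasure hα hβ).const_mul _)
  refine hbound.congr ?_
  filter_upwards [ae_pos_gammaMeasure α β] with l hl
  rw [← integral_mul_const_sub_sq_normalGammaCondKernel c m hκ hl]
  exact integral_congr_ae (ae_of_all _ fun x ↦ (Real.norm_of_nonneg (by positivity)).symm)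

lemma integrable_snd_mul_const_sub_fst_sq_normalGamma (c m : ℝ) (hκ : 0 < κ) (hα : 0 < α)
    (hβ : 0 < β) : Integrable (fun p ↦ p.2 * (c - p.1) ^ 2) (normalGamma m κ α β) := by
  have hswap := measurePreserving_swap_normalGamma m α β hκ
  have hcomp := integrable_mul_const_sub_sq_compProd c m hκ hα hβ
  rw [← hswap.map_eq] at hcomp
  exact hcomp.comp_measurable measurable_swap

lemma integral_snd_mul_const_sub_fst_sq_normalGamma (c m : ℝ) (hκ : 0 < κ) (hα : 0 < α)
    (hβ : 0 < β) :
    ∫ p, p.2 * (c - p.1) ^ 2 ∂normalGamma m κ α β = κ⁻¹ + (c - m) ^ 2 * (α / β) := by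
  have := isProbabilityMeasure_gammaMeasure hα hβ
  calc ∫ p, p.2 * (c - p.1) ^ 2 ∂normalGamma m κ α β
      = ∫ p, p.1 * (c - p.2) ^ 2 ∂(gammaMeasure α β ⊗ₘ normalGammaCondKernel m κ) :=
        (measurePreserving_swap_normalGamma m α β hκ).integral_comp
          MeasurableEquiv.prodComm.measurableEmbedding fun p ↦ p.1 * (c - p.2) ^ 2
    _ = ∫ l, ∫ x, l * (c - x) ^ 2 ∂normalGammaCondKernel m κ l ∂gammaMeasure α β :=
        Measure.integral_compProd (integrable_mul_const_sub_sq_compProd c m hκ hα hβ)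
    _ = ∫ l, (κ⁻¹ + (c - m) ^ 2 * l) ∂gammaMeasure α β := by
        refine integral_congr_ae ?_
        filter_upwards [ae_pos_gammaMeasure α β] with l hl
        exact integral_mul_const_sub_sq_normalGammaCondKernel c m hκ hl
    _ = κ⁻¹ + (c - m) ^ 2 * (α / β) := by
        rw [integral_add (integrable_const _) ((integrable_id_gammaMeasure hα hβ).const_mul _),
          integral_const_mul, integral_id_gammaMeasure hα hβ]
        simp

end NormalGamma

lemma log_gaussianPDFReal_toNNReal_inv (μ x : ℝ) {l : ℝ} (hl : 0 < l) :
    Real.log (gaussianPDFReal μ (Real.toNNReal l⁻¹) x)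
      = (Real.log l - Real.log (2 * π) - l * (x - μ) ^ 2) / 2 := by
  rw [gaussianPDFReal, Real.coe_toNNReal _ (by positivity),
    Real.log_mul (by positivity) (by positivity), Real.log_exp, Real.log_inv,
    Real.log_sqrt (by positivity), Real.log_mul (by positivity) (by positivity), Real.log_inv]
  field_simp
  ring

theorem normalGamma_expected_gaussian_log_density
    (ξ μₙ κₙ αₙ βₙ : ℝ) (hκ : 0 < κₙ) (hα : 0 < αₙ) (hβ : 0 < βₙ) :
    ∫ p, Real.log (gaussianPDFReal p.1 (Real.toNNReal p.2⁻¹) ξ)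
        ∂(normalGamma μₙ κₙ αₙ βₙ)
      = Real.log (gaussianPDFReal μₙ (Real.toNNReal (βₙ / αₙ)) ξ)
        - (1 / 2) * (1 / κₙ + Real.log αₙ - digamma αₙ) := by
  have := isProbabilityMeasure_normalGamma μₙ hκ hα hβ
  have hlog := integrable_log_snd_normalGamma μₙ hκ hα hβ
  have hlogc : Integrable (fun p ↦ Real.log p.2 - Real.log (2 * π)) (normalGamma μₙ κₙ αₙ βₙ) :=
    hlog.sub (integrable_const _)
  have hsq := integrable_snd_mul_const_sub_fst_sq_normalGamma ξ μₙ hκ hα hβ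
  calc ∫ p, Real.log (gaussianPDFReal p.1 (Real.toNNReal p.2⁻¹) ξ) ∂normalGamma μₙ κₙ αₙ βₙ
      = ∫ p, (Real.log p.2 - Real.log (2 * π) - p.2 * (ξ - p.1) ^ 2) / 2
          ∂normalGamma μₙ κₙ αₙ βₙ :=
        integral_congr_ae <| (ae_snd_pos_normalGamma μₙ αₙ βₙ hκ).mono
          fun p hp ↦ log_gaussianPDFReal_toNNReal_inv p.1 ξ hp
    _ = (digamma αₙ - Real.log βₙ - Real.log (2 * π)
          - (κₙ⁻¹ + (ξ - μₙ) ^ 2 * (αₙ / βₙ))) / 2 := by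
        rw [integral_div, integral_sub hlogc hsq, integral_sub hlog (integrable_const _),
          integral_log_snd_normalGamma μₙ hκ hα hβ,
          integral_snd_mul_const_sub_fst_sq_normalGamma ξ μₙ hκ hα hβ, integral_const,
          probReal_univ, one_smul]
    _ = Real.log (gaussianPDFReal μₙ (Real.toNNReal (βₙ / αₙ)) ξ)
          - (1 / 2) * (1 / κₙ + Real.log αₙ - digamma αₙ) := by
        rw [← inv_div αₙ βₙ, log_gaussianPDFReal_toNNReal_inv μₙ ξ (div_pos hα hβ),
          Real.log_div hα.ne' hβ.ne']
        ring
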